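/- arXiv:1801.10280 — 4 statements merged into one kernel-verified Lean document; each statement's English description precedes it below -/
import Mathlib

section
/- Let (X,d) be a metric space, Y ⊆ X, x ∈ X, and let α₀, α₁ be real numbers with 0 < α₀ < α₁. Set T := Y ∪ {x} (with the subspace topology) and B := {z ∈ X : α₀ ≤ d(x,z) ≤ α₁}. Suppose h : T → T is continuous, h(T) = (B ∩ Y) ∪ {x}, and h(w) = w for every w ∈ (B ∩ Y) ∪ {x}. Then the subsets of T given by D := {z ∈ T : d(x,z) ≤ α₁ and h(z) = x} and D' := {z ∈ T : d(x,z) < α₀ and d(x, h(z)) < α₀} are equal, x ∈ D, D ⊆ {z : d(x,z) ≤ α₁}, and D is simultaneously open and closed in the subspace T. -/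
/-!
A point `z` with `α₀ ≤ dist x z ≤ α₁` lies in the annulus and is fixed by `h`, so it is not sent to
`x`; and the only value of `h` at distance less than `α₀` from `x` is `x` itself. Hence the two
descriptions of the set agree. The one with `≤ α₁` and `h z = x` is a closed condition, the one with
strict inequalities is an open condition.
-/

theorem clopen_fiber_of_retraction_onto_annulus
    {X : Type*} [MetricSpace X] (Y : Set X) (x : X) (α₀ α₁ : ℝ)
    (h0 : 0 < α₀) (h01 : α₀ < α₁)
    (h : ↥(Y ∪ {x}) → ↥(Y ∪ {x})) (hc : Continuous h)
    (hrange : Set.range h =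
      {z : ↥(Y ∪ {x}) |
        (z : X) ∈ {w : X | α₀ ≤ dist x w ∧ dist x w ≤ α₁} ∩ Y ∨ (z : X) = x})
    (hfix : ∀ z : ↥(Y ∪ {x}),
      ((z : X) ∈ {w : X | α₀ ≤ dist x w ∧ dist x w ≤ α₁} ∩ Y ∨ (z : X) = x) →
        h z = z) :
    {z : ↥(Y ∪ {x}) | dist x (z : X) ≤ α₁ ∧ ((h z : X) = x)} =
      {z : ↥(Y ∪ {x}) | dist x (z : X) < α₀ ∧ dist x ((h z : X)) < α₀} ∧
    (⟨x, Set.mem_union_right Y (Set.mem_singleton x)⟩ : ↥(Y ∪ {x})) ∈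
      {z : ↥(Y ∪ {x}) | dist x (z : X) ≤ α₁ ∧ ((h z : X) = x)} ∧
    {z : ↥(Y ∪ {x}) | dist x (z : X) ≤ α₁ ∧ ((h z : X) = x)} ⊆
      {z : ↥(Y ∪ {x}) | dist x (z : X) ≤ α₁} ∧
    IsOpen {z : ↥(Y ∪ {x}) | dist x (z : X) ≤ α₁ ∧ ((h z : X) = x)} ∧
    IsClosed {z : ↥(Y ∪ {x}) | dist x (z : X) ≤ α₁ ∧ ((h z : X) = x)} := by
  have hD : {z : ↥(Y ∪ {x}) | dist x (z : X) ≤ α₁ ∧ ((h z : X) = x)} =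
      {z : ↥(Y ∪ {x}) | dist x (z : X) < α₀ ∧ dist x ((h z : X)) < α₀} := by
    ext z
    constructor
    · rintro ⟨hz, hx⟩
      refine ⟨?_, by simpa [hx] using h0⟩
      by_contra! hlt
      have hzx : (z : X) ≠ x := fun e => by
        rw [e, dist_self] at hlt
        exact absurd hlt (not_le.2 h0)
      have hzY : (z : X) ∈ Y := z.2.resolve_right hzx
      rw [hfix z (Or.inl ⟨⟨hlt, hz⟩, hzY⟩)] at hx
      exact hzx hx
    · rintro ⟨hz, hh⟩
      refine ⟨(hz.trans h01).le, ?_⟩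
      have hm : h z ∈ Set.range h := ⟨z, rfl⟩
      rw [hrange] at hm
      exact hm.resolve_left fun hB => absurd hB.1.1 (not_le.2 hh)
  refine ⟨hD, ?_, fun z hz => hz.1, ?_, ?_⟩
  · refine ⟨by simpa using (h0.trans h01).le, ?_⟩
    rw [hfix _ (Or.inr rfl)]
  · rw [hD]
    exact (isOpen_lt (continuous_const.dist continuous_subtype_val) continuous_const).inter
      (isOpen_lt (continuous_const.dist (continuous_subtype_val.comp hc)) continuous_const)
  · exact (isClosed_le (continuous_const.dist continuous_subtype_val) continuous_const).inter
      (isClosed_eq (continuous_subtype_val.comp hc) continuous_const)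
end

section
/- Let (X,d) be a metric space, A ⊆ X a nonempty subset, ε > 0, c ∈ X \ A, t a real number with 0 < t < ε/(2+ε), and y ∈ A a point with d(c,y) ≤ (1+ε)·d_A(c) − (2+ε)·t·d_A(c). Then every x ∈ X with d(c,x) < t·d_A(c) satisfies d(x,y) ≤ (1+ε)·d_A(x), where d_A(z) := inf_{a∈A} d(z,a). -/
theorem dist_le_coeff_mul_infDist_on_small_ball
    {X : Type*} [MetricSpace X] (A : Set X) (hA : A.Nonempty)
    (ε : ℝ) (hε : 0 < ε) (c : X) (hc : c ∉ A)
    (t : ℝ) (ht0 : 0 < t) (ht : t < ε / (2 + ε))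
    (y : X) (hy : y ∈ A)
    (hcy : dist c y ≤ (1 + ε) * Metric.infDist c A - (2 + ε) * t * Metric.infDist c A) :
    ∀ x : X, dist c x < t * Metric.infDist c A →
      dist x y ≤ (1 + ε) * Metric.infDist x A := by
  intro x hx
  have hxy : dist x y ≤ dist c x + dist c y := dist_triangle_left x y c
  have hD : Metric.infDist c A ≤ Metric.infDist x A + dist c x :=
    Metric.infDist_le_infDist_add_dist
  -- With `D = infDist c A`: `dist x y ≤ t D + dist c y ≤ (1 + ε) (D - t D)`, and
  -- `D - t D ≤ infDist x A` since `infDist · A` is 1-Lipschitz.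
  have hx' : Metric.infDist c A - t * Metric.infDist c A ≤ Metric.infDist x A := by linarith
  have := mul_le_mul_of_nonneg_left hx' (by linarith : (0 : ℝ) ≤ 1 + ε)
  linarith
end

section
/- Let K be a nonarchimedean normed field, let n ≥ 2 be a fixed integer, and let C ⊆ K. Then C satisfies Cvx_n(C) if and only if C is empty, or C = K, or there exist a ∈ K and a real number r ≥ 0 such that C = {x ∈ K : ‖x−a‖ ≤ r} or C = {x ∈ K : ‖x−a‖ < r}. -/
/-!
If `a, y ∈ C` and `‖x - a‖ ≤ ‖y - a‖`, then `x = (1 - t) a + t y` with `t = (x - a) / (y - a)`, and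
both coefficients have norm at most `1`. Since `n ≥ 2`, padding with zero coefficients gives `x ∈ C`
(`mem_of_norm_sub_le`). So a nonempty convex `C` is determined by the set of distances
`‖y - a‖`, `y ∈ C`: it is everything if these are unbounded, and otherwise the closed or open ball
around `a` whose radius is their supremum, according to whether the supremum is attained.
Conversely, `∑ αᵢ wᵢ - a = ∑ αᵢ (wᵢ - a)` when `∑ αᵢ = 1`, and the strong triangle inequality keeps
this sum inside the ball.
-/

/-- An `n`-convex set containing `a` and `y` contains the closed ball around `a` of radius
`‖y - a‖`. -/
lemma mem_of_norm_sub_le {K : Type*} [NormedField K]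
    (hna : ∀ a b : K, ‖a + b‖ ≤ max ‖a‖ ‖b‖) {n : ℕ} (hn : 2 ≤ n) {C : Set K}
    (hC : ∀ w α : Fin n → K, (∀ i, w i ∈ C) → (∀ i, ‖α i‖ ≤ 1) → (∑ i, α i) = 1 →
        (∑ i, α i * w i) ∈ C)
    {a y x : K} (ha : a ∈ C) (hy : y ∈ C) (hx : ‖x - a‖ ≤ ‖y - a‖) : x ∈ C := by
  by_cases hya : y - a = 0
  · rw [hya, norm_zero, norm_le_zero_iff, sub_eq_zero] at hx
    rwa [hx]
  obtain ⟨m, rfl⟩ : ∃ m, n = m + 2 := ⟨n - 2, by omega⟩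
  set t := (x - a) / (y - a) with ht
  have ht1 : ‖t‖ ≤ 1 := by
    rw [ht, norm_div]
    exact div_le_one_of_le₀ hx (norm_nonneg _)
  have ht2 : ‖1 - t‖ ≤ 1 := by
    rw [sub_eq_add_neg]
    refine (hna _ _).trans ?_
    simpa using ht1
  have h := hC (Fin.cons a (Fin.cons y fun _ => a)) (Fin.cons (1 - t) (Fin.cons t fun _ => 0))
    (fun i => by
      refine Fin.cases ha (fun i => ?_) i
      exact Fin.cases hy (fun i => ha) i)
    (fun i => by
      refine Fin.cases ht2 (fun i => ?_) i
      refine Fin.cases ht1 (fun i => ?_) i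
      simp)
    (by simp [Fin.sum_univ_succ])
  simp only [Fin.sum_univ_succ, Fin.cons_zero, Fin.cons_succ, zero_mul, Finset.sum_const_zero,
    add_zero] at h
  convert h using 1
  have : t * (y - a) = x - a := div_mul_cancel₀ _ hya
  linear_combination -this

theorem ultrametrically_convex_iff_ball
    {K : Type*} [NormedField K]
    (hna : ∀ a b : K, ‖a + b‖ ≤ max ‖a‖ ‖b‖)
    (n : ℕ) (hn : 2 ≤ n) (C : Set K) :
    (∀ w α : Fin n → K, (∀ i, w i ∈ C) → (∀ i, ‖α i‖ ≤ 1) → (∑ i, α i) = 1 →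
        (∑ i, α i * w i) ∈ C) ↔
      C = ∅ ∨ C = Set.univ ∨
        ∃ (a : K) (r : ℝ), 0 ≤ r ∧
          (C = {x : K | ‖x - a‖ ≤ r} ∨ C = {x : K | ‖x - a‖ < r}) := by
  constructor
  · intro hC
    rcases C.eq_empty_or_nonempty with h0 | ⟨a, ha⟩
    · exact Or.inl h0
    right
    by_cases hb : BddAbove (Set.image (fun y => ‖y - a‖) C)
    · right
      set r := sSup (Set.image (fun y => ‖y - a‖) C) with hr
      have hle : ∀ y ∈ C, ‖y - a‖ ≤ r := fun y hy => le_csSup hb ⟨y, hy, rfl⟩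
      refine ⟨a, r, (norm_nonneg _).trans (hle a ha), ?_⟩
      by_cases hatt : ∃ y ∈ C, ‖y - a‖ = r
      · obtain ⟨y, hy, hyr⟩ := hatt
        left
        ext x
        exact ⟨hle x, fun hx => mem_of_norm_sub_le hna hn hC ha hy (hyr ▸ hx)⟩
      · right
        ext x
        refine ⟨fun hx => lt_of_le_of_ne (hle x hx) fun h => hatt ⟨x, hx, h⟩, fun hx => ?_⟩
        rw [Set.mem_ofPred_eq, hr] at hx
        obtain ⟨_, ⟨y, hy, rfl⟩, hxy⟩ := exists_lt_of_lt_csSup (Set.Nonempty.image _ ⟨a, ha⟩) hx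
        exact mem_of_norm_sub_le hna hn hC ha hy hxy.le
    · left
      refine Set.eq_univ_of_forall fun x => ?_
      obtain ⟨_, ⟨y, hy, rfl⟩, hxy⟩ := not_bddAbove_iff.mp hb ‖x - a‖
      exact mem_of_norm_sub_le hna hn hC ha hy hxy.le
  · intro h w α hw hα hsum
    have key : ∀ a, ∑ i, α i * w i - a = ∑ i, α i * (w i - a) := fun a => by
      simp only [mul_sub, Finset.sum_sub_distrib, ← Finset.sum_mul, hsum, one_mul]
    have hterm : ∀ a i, ‖α i * (w i - a)‖ ≤ ‖w i - a‖ := fun a i => by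
      rw [norm_mul]
      exact mul_le_of_le_one_left (norm_nonneg _) (hα i)
    have i0 : Fin n := ⟨0, by omega⟩
    rcases h with rfl | rfl | ⟨a, r, hr, rfl | rfl⟩
    · exact (hw i0).elim
    · trivial
    · change ‖_‖ ≤ r
      rw [key]
      exact Finset.sum_induction _ (fun x => ‖x‖ ≤ r)
        (fun x y hx hy => (hna x y).trans (max_le hx hy)) (by simpa using hr)
        fun i _ => (hterm a i).trans (hw i)
    · change ‖_‖ < r
      rw [key]
      -- The empty sum lies in the open ball because some `w i` does, which forces `0 < r`.
      exact Finset.sum_induction _ (fun x => ‖x‖ < r)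
        (fun x y hx hy => (hna x y).trans_lt (max_lt hx hy))
        (by simpa using (norm_nonneg _).trans_lt (hw i0))
        fun i _ => (hterm a i).trans_lt (hw i)
end

section
/- Let (X,d) be a metric space and (U_i)_{i∈ℕ} a sequence of open subsets of X, and set Y := ⋃_{i∈ℕ} U_i. Then there exist open sets V_i ⊆ X and sets A_i ⊆ X that are closed in the subspace Y, such that V_i ⊆ A_i ⊆ U_i for every i, ⋃_{i∈ℕ} V_i = Y, and the family (A_i)_{i∈ℕ} is locally finite in Y, i.e., every point of Y has a neighborhood meeting A_i for only finitely many i. -/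
/-!
The subspace `Y = ⋃ i, U i` is metrizable, hence paracompact and normal. Paracompactness refines the
cover of `Y` by the traces of the `U i` to a locally finite open cover `w` with the same index set
(`precise_refinement`), and the shrinking lemma gives an open cover `v` of `Y` with
`closure (v i) ⊆ w i`. The images in `X` of `v i` and of its closure in `Y` are the required
`V i` and `A i`; they behave well because `Y` is open in `X`.
-/

theorem countable_paracompactness_interpolation
    {X : Type*} [MetricSpace X] (U : ℕ → Set X) (hU : ∀ i, IsOpen (U i)) :
    ∃ V A : ℕ → Set X,
      (∀ i, IsOpen (V i)) ∧
      (∀ i, ∃ F : Set X, IsClosed F ∧ A i = F ∩ ⋃ j, U j) ∧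
      (∀ i, V i ⊆ A i) ∧ (∀ i, A i ⊆ U i) ∧
      (⋃ i, V i) = (⋃ i, U i) ∧
      (∀ x ∈ ⋃ i, U i, ∃ N : Set X, IsOpen N ∧ x ∈ N ∧
        {i : ℕ | (A i ∩ N).Nonempty}.Finite) := by
  have hY : IsOpen (⋃ i, U i) := isOpen_iUnion hU
  obtain ⟨w, wo, wc, wf, wU⟩ := precise_refinement
    (fun i => ((↑) : (⋃ i, U i : Set X) → X) ⁻¹' U i)
    (fun i => (hU i).preimage continuous_subtype_val)
    (by rw [← Set.preimage_iUnion, Subtype.coe_preimage_self])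
  obtain ⟨v, vc, vo, vw⟩ := exists_iUnion_eq_closure_subset wo wf.point_finite wc
  refine ⟨fun i => (↑) '' v i, fun i => (↑) '' closure (v i),
    fun i => hY.isOpenMap_subtype_val _ (vo i), fun i => ?_,
    fun i => Set.image_mono subset_closure, fun i => ?_, ?_, fun x hx => ?_⟩
  · obtain ⟨F, hF, hFv⟩ := isClosed_induced_iff.1 (isClosed_closure (s := v i))
    exact ⟨F, hF, by beta_reduce; rw [← hFv, Subtype.image_preimage_coe, Set.inter_comm]⟩
  · rintro _ ⟨y, hy, rfl⟩
    exact wU i (vw i hy)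
  · rw [← Set.image_iUnion, vc, Set.image_univ, Subtype.range_coe]
  · obtain ⟨t, ht, hfin⟩ := wf ⟨x, hx⟩
    obtain ⟨s, hst, hs, hxs⟩ := mem_nhds_iff.1 ht
    refine ⟨(↑) '' s, hY.isOpenMap_subtype_val _ hs, ⟨_, hxs, rfl⟩, hfin.subset ?_⟩
    rintro i ⟨_, ⟨y, hy, rfl⟩, z, hz, hzy⟩
    obtain rfl := Subtype.ext hzy
    exact ⟨z, vw i hy, hst hz⟩
end
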